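/- arXiv:2506.17888 — 2 statements merged into one kernel-verified Lean document; each statement's English description precedes it below -/
import Mathlib

section
/- Let b > 0 and let a_g, a_f be real numbers with b/2 < a_g < a_f < b, and let p > q > 0 be constants. Let f and g assign to each closed interval [x,y] (x ≤ y in ℝ) a nonnegative real value, antitone under inclusion of intervals, such that f([x,y]) = p whenever [x,y] ⊆ (0, a_f), f([x,y]) = 0 whenever [x,y] ⊄ [0,b], g([x,y]) = q whenever [x,y] ⊆ (0, a_g), and g([x,y]) = 0 whenever [x,y] ⊄ [0,b]. Then d_E(f, g) ≥ a_f / 2. -/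
open scoped ENNReal

/-- An assignment of values to closed intervals `[x, y]` is antitone under inclusion of
intervals if larger intervals receive smaller values. -/
def IntervalAntitone (F : ∀ x y : ℝ, x ≤ y → ℝ) : Prop :=
  ∀ (x y x' y' : ℝ) (h : x ≤ y) (h' : x' ≤ y'),
    x' ≤ x → y ≤ y' → F x' y' h' ≤ F x y h

/-- Two interval-indexed invariants are `ε`-eroded if each dominates the other after
thickening intervals by `ε`. -/
def Eroded (F₁ F₂ : ∀ x y : ℝ, x ≤ y → ℝ) (ε : ℝ) : Prop :=
  0 ≤ ε ∧ ∀ (x y : ℝ) (hxy : x ≤ y) (hxy' : x - ε ≤ y + ε),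
    F₂ (x - ε) (y + ε) hxy' ≤ F₁ x y hxy ∧ F₁ (x - ε) (y + ε) hxy' ≤ F₂ x y hxy

/-- The erosion distance: the infimum of all `ε ≥ 0` such that the two invariants are
`ε`-eroded (`∞` if none exists). -/
noncomputable def erosionDist (F₁ F₂ : ∀ x y : ℝ, x ≤ y → ℝ) : ℝ≥0∞ :=
  sInf {e : ℝ≥0∞ | ∃ ε : ℝ, e = ENNReal.ofReal ε ∧ Eroded F₁ F₂ ε}

/-- Lower bound for the erosion distance between two interval-indexed invariants of the
shape described in the paper: `d_E(f, g) ≥ a_f / 2`. -/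
theorem erosionDist_ge
    (b a_g a_f p q : ℝ) (hb : 0 < b) (h₁ : b / 2 < a_g) (h₂ : a_g < a_f) (h₃ : a_f < b)
    (hq : 0 < q) (hpq : q < p)
    (f g : ∀ x y : ℝ, x ≤ y → ℝ)
    (hf_nonneg : ∀ (x y : ℝ) (h : x ≤ y), 0 ≤ f x y h)
    (hg_nonneg : ∀ (x y : ℝ) (h : x ≤ y), 0 ≤ g x y h)
    (hf_anti : IntervalAntitone f) (hg_anti : IntervalAntitone g)
    (hf_p : ∀ (x y : ℝ) (h : x ≤ y), 0 < x → y < a_f → f x y h = p)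
    (hf_0 : ∀ (x y : ℝ) (h : x ≤ y), ¬(0 ≤ x ∧ y ≤ b) → f x y h = 0)
    (hg_q : ∀ (x y : ℝ) (h : x ≤ y), 0 < x → y < a_g → g x y h = q)
    (hg_0 : ∀ (x y : ℝ) (h : x ≤ y), ¬(0 ≤ x ∧ y ≤ b) → g x y h = 0) :
    ENNReal.ofReal (a_f / 2) ≤ erosionDist f g := by
  refine le_sInf ?_
  rintro _ ⟨ε, rfl, hε, h⟩
  refine ENNReal.ofReal_le_ofReal ?_
  by_contra! hlt
  have hf_le_g := (h (a_f / 2) (a_f / 2) le_rfl (by linarith)).2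
  rw [hf_p _ _ _ (by linarith) (by linarith), hg_q _ _ _ (by linarith) (by linarith)] at hf_le_g
  linarith
end

section
/- Let b > 0 and let a_g, a_f be real numbers with b/2 < a_g < a_f < b, and let p > q > 0 be constants. Let f and g assign to each closed interval [x,y] (x ≤ y in ℝ) a nonnegative real value, antitone under inclusion of intervals, such that f([x,y]) = p whenever [x,y] ⊆ (0, a_f), f([x,y]) = 0 whenever [x,y] ⊄ [0,b], g([x,y]) = q whenever [x,y] ⊆ (0, a_g), and g([x,y]) = 0 whenever [x,y] ⊄ [0,b]. Assume in addition that f([x,y]) = 0 whenever y − x > a_f and g([x,y]) = 0 whenever y − x > a_g. Then d_E(f, g) = a_f / 2. -/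
open scoped ENNReal

/-- Exact value of the erosion distance between two interval-indexed invariants of the
shape described in the paper, assuming in addition that `f` (resp. `g`) vanishes on
intervals of length greater than `a_f` (resp. `a_g`): `d_E(f, g) = a_f / 2`. -/
theorem erosionDist_eq
    (b a_g a_f p q : ℝ) (hb : 0 < b) (h₁ : b / 2 < a_g) (h₂ : a_g < a_f) (h₃ : a_f < b)
    (hq : 0 < q) (hpq : q < p)
    (f g : ∀ x y : ℝ, x ≤ y → ℝ)
    (hf_nonneg : ∀ (x y : ℝ) (h : x ≤ y), 0 ≤ f x y h)
    (hg_nonneg : ∀ (x y : ℝ) (h : x ≤ y), 0 ≤ g x y h)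
    (hf_anti : IntervalAntitone f) (hg_anti : IntervalAntitone g)
    (hf_p : ∀ (x y : ℝ) (h : x ≤ y), 0 < x → y < a_f → f x y h = p)
    (hf_0 : ∀ (x y : ℝ) (h : x ≤ y), ¬(0 ≤ x ∧ y ≤ b) → f x y h = 0)
    (hg_q : ∀ (x y : ℝ) (h : x ≤ y), 0 < x → y < a_g → g x y h = q)
    (hg_0 : ∀ (x y : ℝ) (h : x ≤ y), ¬(0 ≤ x ∧ y ≤ b) → g x y h = 0)
    (hf_len : ∀ (x y : ℝ) (h : x ≤ y), a_f < y - x → f x y h = 0)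
    (hg_len : ∀ (x y : ℝ) (h : x ≤ y), a_g < y - x → g x y h = 0) :
    erosionDist f g = ENNReal.ofReal (a_f / 2) := by
  refine le_antisymm ?_ (le_sInf ?_)
  · refine le_of_forall_gt_imp_ge_of_dense fun e he => ?_
    by_cases htop : e = ∞
    · exact htop ▸ le_top
    lift e to NNReal using htop
    have hlt : a_f / 2 < (e : ℝ) := by
      rw [← ENNReal.ofReal_coe_nnreal] at he
      exact (ENNReal.ofReal_lt_ofReal_iff_of_nonneg (by linarith)).1 he
    refine sInf_le ⟨e, ENNReal.ofReal_coe_nnreal.symm, e.2, fun x y hxy hxy' => ⟨?_, ?_⟩⟩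
    · rw [hg_len _ _ hxy' (by linarith)]
      exact hf_nonneg x y hxy
    · rw [hf_len _ _ hxy' (by linarith)]
      exact hg_nonneg x y hxy
  · rintro _ ⟨ε, rfl, hε, her⟩
    refine ENNReal.ofReal_le_ofReal (not_lt.1 fun hlt => ?_)
    -- The midpoint of `(0, a_f)` lies in `(0, a_g)`, and its thickening stays in `(0, a_f)`.
    have hle := (her (a_f / 2) (a_f / 2) le_rfl (by linarith)).2
    rw [hf_p _ _ _ (by linarith) (by linarith), hg_q _ _ _ (by linarith) (by linarith)] at hle
    linarith
end
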